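/- Let Γ be a connected non-bipartite graph. Assume there is a triangle C of Γ such that either V ∖ N[C] has at most one vertex, or the induced subgraph of the complement graph Γ^c on V ∖ N[C] is disconnected. Then depth R/I^5 = 0, i.e., the maximal graded ideal m is an associated prime of R/I^5. -/

import Mathlib

open MvPolynomial

noncomputable section

/-- The edge ideal of a graph `Γ` on vertex set `σ`, in `k[x_i : i ∈ σ]`. -/
def edgeIdeal (k : Type) [Field k] {σ : Type} (Γ : SimpleGraph σ) :
    Ideal (MvPolynomial σ k) :=
  Ideal.span { m | ∃ i j : σ, Γ.Adj i j ∧ m = X i * X j }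

/-- The maximal graded ideal `(x_i : i ∈ σ)` of `k[x_i : i ∈ σ]`. -/
def maxIdeal (k : Type) [Field k] (σ : Type) : Ideal (MvPolynomial σ k) :=
  Ideal.span (Set.range (X : σ → MvPolynomial σ k))

/-- `depth R/J = 0`, i.e. the maximal graded ideal is an associated prime of `R/J`. -/
def DepthZero (k : Type) [Field k] {σ : Type} (J : Ideal (MvPolynomial σ k)) : Prop :=
  maxIdeal k σ ∈ associatedPrimes (MvPolynomial σ k) (MvPolynomial σ k ⧸ J)

/-- The `i`-th local cohomology of `R/J` with support in the maximal graded ideal. -/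
def locCoh (k : Type) [Field k] {σ : Type} (J : Ideal (MvPolynomial σ k)) (i : ℕ) :=
  (localCohomology (maxIdeal k σ) i).obj (ModuleCat.of _ (MvPolynomial σ k ⧸ J))

/-- `depth R/J`, defined as the least `i` with `H^i_m(R/J) ≠ 0`. -/
def rDepth (k : Type) [Field k] {σ : Type} (J : Ideal (MvPolynomial σ k)) : ℕ :=
  sInf { i | Nontrivial (locCoh k J i) }

/-- A set `U` of vertices is dominating: every vertex outside `U` is adjacent to a
vertex of `U`. -/
def Dominating {σ : Type} (Γ : SimpleGraph σ) (U : Set σ) : Prop :=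
  ∀ v ∉ U, ∃ u ∈ U, Γ.Adj u v

/-- The closed neighborhood `N[v]` of a vertex. -/
def closedNbhd {σ : Type} (Γ : SimpleGraph σ) (v : σ) : Set σ :=
  insert v { u | Γ.Adj v u }

/-- The closed neighborhood `N[C]` of a set of vertices. -/
def closedNbhdSet {σ : Type} (Γ : SimpleGraph σ) (C : Set σ) : Set σ :=
  ⋃ v ∈ C, closedNbhd Γ v

/-- An odd cycle of length `m` (given as an injective map `ZMod m → σ` with consecutive
vertices adjacent) in `Γ`. -/
def IsOddCycle {σ : Type} (Γ : SimpleGraph σ) (m : ℕ) (c : ZMod m → σ) : Prop :=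
  Odd m ∧ 3 ≤ m ∧ Function.Injective c ∧ ∀ i, Γ.Adj (c i) (c (i + 1))

/-- `F` is an independent set of `Γ`. -/
def IsIndep {σ : Type} [Fintype σ] [DecidableEq σ] (Γ : SimpleGraph σ) (F : Finset σ) : Prop :=
  ∀ i ∈ F, ∀ j ∈ F, ¬ Γ.Adj i j

/-- `F` is a maximal independent set of `Γ`. -/
def IsMaxIndep {σ : Type} [Fintype σ] [DecidableEq σ] (Γ : SimpleGraph σ) (F : Finset σ) : Prop :=
  IsIndep Γ F ∧ ∀ G : Finset σ, IsIndep Γ G → F ⊆ G → G = F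

/-- The prime ideal `P_F = (x_i : i ∉ F)`. -/
def PF (k : Type) [Field k] {σ : Type} [Fintype σ] [DecidableEq σ] (F : Finset σ) :
    Ideal (MvPolynomial σ k) :=
  Ideal.span { m | ∃ i ∉ F, m = X i }

/-- The `t`-th symbolic power `I^{(t)} = ⋂_{F maximal independent} P_F^t` of the edge ideal. -/
def symbPow (k : Type) [Field k] {σ : Type} [Fintype σ] [DecidableEq σ]
    (Γ : SimpleGraph σ) (t : ℕ) : Ideal (MvPolynomial σ k) :=
  ⨅ F ∈ { F : Finset σ | IsMaxIndep Γ F }, PF k F ^ t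

/-- The monomial `x^a`. -/
def xPow (k : Type) [Field k] {σ : Type} [Fintype σ] (a : σ → ℕ) : MvPolynomial σ k :=
  ∏ i, X i ^ a i

/-- The localization `R[x_i^{-1} : i ∈ F]`. -/
abbrev locAt (k : Type) [Field k] {σ : Type} (F : Finset σ) :=
  Localization (Submonoid.closure ((fun i => (X i : MvPolynomial σ k)) '' (F : Set σ)))

/-- The degree complex `Δ_a(J) = {F : x^a ∉ J·R[x_i^{-1} : i ∈ F]}` of a monomial ideal `J`. -/
def degComplex (k : Type) [Field k] {σ : Type} [Fintype σ] (J : Ideal (MvPolynomial σ k))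
    (a : σ → ℕ) : Set (Finset σ) :=
  { F | algebraMap (MvPolynomial σ k) (locAt k F) (xPow k a) ∉
      J.map (algebraMap (MvPolynomial σ k) (locAt k F)) }

/-- `F` is a facet (maximal face) of the complex `Δ`. -/
def IsFacet {σ : Type} (Δ : Set (Finset σ)) (F : Finset σ) : Prop :=
  F ∈ Δ ∧ ∀ G ∈ Δ, F ⊆ G → G = F

/-- The complex `Δ` is disconnected: its vertex set splits into two nonempty parts such that
no face meets both. -/
def ComplexDisconnected {σ : Type} (Δ : Set (Finset σ)) : Prop :=
  ∃ A B : Set σ, A.Nonempty ∧ B.Nonempty ∧ Disjoint A B ∧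
    (∀ i, {i} ∈ Δ ↔ i ∈ A ∪ B) ∧
    ∀ F ∈ Δ, ¬ ((∃ i ∈ F, i ∈ A) ∧ (∃ j ∈ F, j ∈ B))

/-- The polynomial ring `R_v = k[x_i : i ≠ v]`. -/
abbrev Rv (k : Type) [Field k] {σ : Type} (v : σ) := MvPolynomial { i : σ // i ≠ v } k

/-- The localization `R[x_v^{-1}]`. -/
abbrev LocAway (k : Type) [Field k] {σ : Type} (v : σ) :=
  Localization.Away (X v : MvPolynomial σ k)

/-- For an ideal `I` of `R`, the ideal `I_v = I·R[x_v^{-1}] ∩ R_v` of `R_v`. -/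
def idealV (k : Type) [Field k] {σ : Type} (I : Ideal (MvPolynomial σ k)) (v : σ) :
    Ideal (Rv k v) :=
  Ideal.comap ((algebraMap (MvPolynomial σ k) (LocAway k v)).comp
      (MvPolynomial.rename (Subtype.val : { i : σ // i ≠ v } → σ)).toRingHom)
    (I.map (algebraMap (MvPolynomial σ k) (LocAway k v)))

/-- The edge ideal of the induced subgraph `Γ_U` in `k[x_i : i ∈ U]`. -/
def edgeIdealOn (k : Type) [Field k] {σ : Type} (Γ : SimpleGraph σ) (U : Set σ) :
    Ideal (MvPolynomial U k) :=
  Ideal.span { m | ∃ i j : U, Γ.Adj (i : σ) (j : σ) ∧ m = X i * X j }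

/-- `Γ` has no isolated vertices. -/
def NoIsolated {σ : Type} (Γ : SimpleGraph σ) : Prop :=
  ∀ v : σ, ∃ u : σ, Γ.Adj v u

theorem aux_prod (k : Type) [Field k] {σ : Type} (Γ : SimpleGraph σ)
    {a b c d e f g h i j : σ} (h1 : Γ.Adj a b) (h2 : Γ.Adj c d) (h3 : Γ.Adj e f)
    (h4 : Γ.Adj g h) (h5 : Γ.Adj i j) :
    (X a * X b) * (X c * X d) * (X e * X f) * (X g * X h) * (X i * X j) ∈ edgeIdeal k Γ ^ 5 := by
  have key : ∀ {a b : σ}, Γ.Adj a b → (X a * X b : MvPolynomial σ k) ∈ edgeIdeal k Γ :=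
    fun {a b} h => Ideal.subset_span ⟨a, b, h, rfl⟩
  have : edgeIdeal k Γ ^ 5 =
    edgeIdeal k Γ * edgeIdeal k Γ * edgeIdeal k Γ * edgeIdeal k Γ * edgeIdeal k Γ := by ring
  rw [this]
  exact Ideal.mul_mem_mul (Ideal.mul_mem_mul (Ideal.mul_mem_mul (Ideal.mul_mem_mul
    (key h1) (key h2)) (key h3)) (key h4)) (key h5)

theorem aux_le (k : Type) [Field k] {σ : Type} (Γ : SimpleGraph σ) :
    edgeIdeal k Γ ^ 5 ≤ idealOfVars σ k ^ 10 := by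
  have : edgeIdeal k Γ ≤ idealOfVars σ k ^ 2 := by
    refine Ideal.span_le.2 ?_
    rintro _ ⟨i, j, -, rfl⟩
    rw [pow_two]
    exact Ideal.mul_mem_mul (Ideal.subset_span ⟨i, rfl⟩) (Ideal.subset_span ⟨j, rfl⟩)
  calc edgeIdeal k Γ ^ 5 ≤ (idealOfVars σ k ^ 2) ^ 5 := Ideal.pow_right_mono this 5
    _ = _ := by rw [← pow_mul]

theorem aux_depth (k : Type) [Field k] {σ : Type} (J : Ideal (MvPolynomial σ k))
    (f : MvPolynomial σ k) (hf : f ∉ J) (h : ∀ v, f * X v ∈ J) : DepthZero k J := by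
  have hmax : (maxIdeal k σ).IsMaximal := by
    have e : maxIdeal k σ = RingHom.ker (constantCoeff : MvPolynomial σ k →+* k) := by
      ext p
      have := mem_pow_idealOfVars_iff' 1 p
      rw [pow_one] at this
      change p ∈ idealOfVars σ k ↔ _
      rw [this, RingHom.mem_ker, constantCoeff_eq]
      constructor
      · intro h
        exact h 0 (by simp)
      · intro h x hx
        have : x = 0 := by
          rw [← Finsupp.degree_eq_zero_iff]; omega
        rw [this, h]
    rw [e]
    exact RingHom.ker_isMaximal_of_surjective _ (fun x => ⟨C x, by simp⟩)
  refine ⟨hmax.isPrime, Ideal.Quotient.mk J f, ?_⟩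
  have hle : maxIdeal k σ ≤ Submodule.colon (⊥ : Submodule (MvPolynomial σ k) (MvPolynomial σ k ⧸ J))
      {Ideal.Quotient.mk J f} := by
    refine Ideal.span_le.2 ?_
    rintro _ ⟨v, rfl⟩
    rw [SetLike.mem_coe, Submodule.mem_colon_singleton, Submodule.mem_bot]
    change Ideal.Quotient.mk J (X v * f) = 0
    rw [Ideal.Quotient.eq_zero_iff_mem, mul_comm]
    exact h v
  refine hmax.eq_of_le ?_ (hle.trans Ideal.le_radical)
  rw [Ne, Ideal.radical_eq_top, Ideal.eq_top_iff_one, Submodule.mem_colon_singleton,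
    Submodule.mem_bot, one_smul, Ideal.Quotient.eq_zero_iff_mem]
  exact hf

theorem aux_main (k : Type) [Field k] {σ : Type} (Γ : SimpleGraph σ)
    {u₁ u₂ u₃ z a b : σ} (h12 : Γ.Adj u₁ u₂) (h13 : Γ.Adj u₁ u₃) (h23 : Γ.Adj u₂ u₃)
    (hz : Γ.Adj z u₁) (ha : Γ.Adj a z) (hb : Γ.Adj a b)
    (hv : ∀ v, (Γ.Adj v u₁ ∨ Γ.Adj v u₂ ∨ Γ.Adj v u₃) ∨ Γ.Adj v a ∨ Γ.Adj v b) :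
    DepthZero k (edgeIdeal k Γ ^ 5) := by
  refine aux_depth k _ ((X u₁ * X u₂ * X u₃) * (X a * X z) * (X a * X b) * (X z * X u₁)) ?_ ?_
  · intro hmem
    have := aux_le k Γ hmem
    simp only [X, monomial_mul, mul_one] at this
    rw [monomial_mem_pow_idealOfVars_iff _ _ one_ne_zero] at this
    simp at this
  · intro v
    rcases hv v with (h | h | h) | h | h
    · convert aux_prod k Γ h h23 ha hb hz using 1; ring
    · convert aux_prod k Γ h h13 ha hb hz using 1; ring
    · convert aux_prod k Γ h h12 ha hb hz using 1; ring
    · convert aux_prod k Γ h hz h23 hb hz using 1; ring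
    · convert aux_prod k Γ h ha ha h12 h13 using 1; ring

theorem aux_graph (k : Type) [Field k] {σ : Type} (Γ : SimpleGraph σ) (hconn : Γ.Connected)
    {u₁ u₂ u₃ : σ} (h12 : Γ.Adj u₁ u₂) (h13 : Γ.Adj u₁ u₃) (h23 : Γ.Adj u₂ u₃)
    (W : Set σ) (hW : ∀ v, v ∉ W ↔ (Γ.Adj v u₁ ∨ Γ.Adj v u₂ ∨ Γ.Adj v u₃))
    (hC : W.Subsingleton ∨ ¬ (Γᶜ.induce W).Connected) :
    DepthZero k (edgeIdeal k Γ ^ 5) := by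
  by_cases hne : ∃ w, w ∈ W
  swap
  · push Not at hne
    exact aux_main k Γ h12 h13 h23 h12.symm h23.symm h13.symm
      (fun v => Or.inl ((hW v).1 (hne v)))
  obtain ⟨w, hw⟩ := hne
  obtain ⟨p⟩ := hconn.preconnected w u₁
  have hu : u₁ ∉ W := (hW _).2 (Or.inr (Or.inl h12))
  obtain ⟨d, -, hd1, hd2⟩ := p.exists_boundary_dart W hw hu
  obtain ⟨⟨a, z⟩, haz⟩ := d
  simp only at hd1 hd2 haz
  obtain ⟨b, hab, hv⟩ : ∃ b, Γ.Adj a b ∧ ∀ v ∈ W, Γ.Adj v a ∨ Γ.Adj v b := by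
    rcases hC with hs | hd
    · exact ⟨z, haz, fun v hv => Or.inr (hs hd1 hv ▸ haz)⟩
    · have : ∃ b : W, ¬ (Γᶜ.induce W).Reachable ⟨a, hd1⟩ b := by
        by_contra hcon
        push Not at hcon
        exact hd ((SimpleGraph.connected_iff _).2
          ⟨fun x y => (hcon x).symm.trans (hcon y), ⟨⟨a, hd1⟩⟩⟩)
      obtain ⟨b, hb⟩ := this
      have key : ∀ x y : W, (Γᶜ.induce W).Reachable ⟨a, hd1⟩ x →
          ¬ (Γᶜ.induce W).Reachable ⟨a, hd1⟩ y → Γ.Adj x y := by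
        intro x y hx hy
        by_contra hn
        have hxy : x ≠ y := by rintro rfl; exact hy hx
        apply hy
        refine hx.trans (SimpleGraph.Adj.reachable ?_)
        simp only [SimpleGraph.comap_adj, SimpleGraph.compl_adj]
        exact ⟨fun h => hxy (Subtype.ext h), hn⟩
      refine ⟨b, key ⟨a, hd1⟩ b (SimpleGraph.Reachable.refl _) hb, fun v hv => ?_⟩
      by_cases hr : (Γᶜ.induce W).Reachable ⟨a, hd1⟩ ⟨v, hv⟩
      · exact Or.inr (key _ _ hr hb)
      · exact Or.inl (key ⟨a, hd1⟩ ⟨v, hv⟩ (SimpleGraph.Reachable.refl _) hr).symm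
  have hv' : ∀ v, (Γ.Adj v u₁ ∨ Γ.Adj v u₂ ∨ Γ.Adj v u₃) ∨ Γ.Adj v a ∨ Γ.Adj v b := by
    intro v
    by_cases h : v ∈ W
    · exact Or.inr (hv v h)
    · exact Or.inl ((hW v).1 h)
  rcases (hW z).1 hd2 with h | h | h
  · exact aux_main k Γ h12 h13 h23 h haz hab hv'
  · exact aux_main k Γ h12.symm h23 h13 h haz hab (fun v => by have := hv' v; tauto)
  · exact aux_main k Γ h13.symm h23.symm h12 h haz hab (fun v => by have := hv' v; tauto)

/-- Let `Γ` be a connected non-bipartite graph with a triangle `C`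
such that either `V ∖ N[C]` has at most one vertex or the induced subgraph of the
complement graph `Γᶜ` on `V ∖ N[C]` is disconnected. Then `depth R/I^5 = 0`, i.e. the
maximal graded ideal is an associated prime of `R/I^5`. -/
theorem stmt18 (k : Type) [Field k] (n : ℕ) (Γ : SimpleGraph (Fin n))
    (hiso : NoIsolated Γ) (hconn : Γ.Connected) (hnb : ¬ Γ.Colorable 2)
    (u₁ u₂ u₃ : Fin n) (h12 : Γ.Adj u₁ u₂) (h13 : Γ.Adj u₁ u₃) (h23 : Γ.Adj u₂ u₃)
    (hC : (closedNbhdSet Γ ({u₁, u₂, u₃} : Set (Fin n)))ᶜ.Subsingleton ∨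
      ¬ ((Γᶜ).induce ((closedNbhdSet Γ ({u₁, u₂, u₃} : Set (Fin n)))ᶜ :
        Set (Fin n))).Connected) :
    DepthZero k ((edgeIdeal k Γ) ^ 5) := by
  refine aux_graph k Γ hconn h12 h13 h23 _ (fun v => ?_) hC
  simp only [closedNbhdSet, closedNbhd, Set.mem_compl_iff, not_not, Set.mem_iUnion,
    Set.mem_insert_iff, Set.mem_singleton_iff, Set.mem_ofPred_eq, exists_prop,
    exists_eq_or_imp, exists_eq_left]
  have s : ∀ u, Γ.Adj u v ↔ Γ.Adj v u := fun u => Γ.adj_comm u v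
  simp only [s]
  constructor
  · rintro ((rfl | h) | (rfl | h) | (rfl | h)) <;> tauto
  · tauto

end
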